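/- arXiv:1810.08932 — 2 statements merged into one kernel-verified Lean document; each statement's English description precedes it below -/
import Mathlib

section
/- For all α, β ∈ (0, π/2), the size-7 family T₇ is not a UPB for any of the six groupings of type 2×2×4 (A:B:CD, A:C:BD, A:D:BC, B:C:AD, B:D:AC, C:D:AB). That is: for each way of merging exactly one pair of the four qubit factors into a ℂ⁴ block, there exists a nonzero product vector for that grouping orthogonal to all seven members of T₇. -/
/-- The 4-qubit index type. -/
abbrev Q4 : Type := Fin 2 × Fin 2 × Fin 2 × Fin 2

/-- The standard inner product on the 4-qubit space `Q4 → ℂ`. -/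
noncomputable def ip (v w : Q4 → ℂ) : ℂ := ∑ x, (starRingEnd ℂ) (v x) * w x

/-- The 4-qubit product vector `|x,y,z,w⟩`. -/
def pv (x y z w : Fin 2 → ℂ) : Q4 → ℂ := fun p => x p.1 * y p.2.1 * z p.2.2.1 * w p.2.2.2

/-- `|0⟩`. -/
def ket0 : Fin 2 → ℂ := ![1, 0]

/-- `|1⟩`. -/
def ket1 : Fin 2 → ℂ := ![0, 1]

/-- `(cos t, sin t)` as a qubit state. -/
noncomputable def vk (t : ℝ) : Fin 2 → ℂ := ![(Real.cos t : ℂ), (Real.sin t : ℂ)]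

/-- `(sin t, −cos t)` as a qubit state, orthogonal to `vk t`. -/
noncomputable def vk' (t : ℝ) : Fin 2 → ℂ := ![(Real.sin t : ℂ), -(Real.cos t : ℂ)]

/-- The 4-qubit UPB of size 7:
`{|0,0,0,0⟩, |0,a,a,1⟩, |0,a',1,a⟩, |1,0,0,b⟩, |1,a',a,b'⟩, |a,a,1,0⟩, |a',1,a',a'⟩}`. -/
noncomputable def T7 (α β : ℝ) : Fin 7 → Q4 → ℂ :=
  ![pv ket0 ket0 ket0 ket0,
    pv ket0 (vk α) (vk α) ket1,
    pv ket0 (vk' α) ket1 (vk α),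
    pv ket1 ket0 ket0 (vk β),
    pv ket1 (vk' α) (vk α) (vk' β),
    pv (vk α) (vk α) ket1 ket0,
    pv (vk' α) ket1 (vk' α) (vk' α)]

/-!
Fix nonzero vectors `c`, `d` on the two unmerged qubits. A product vector `c ⊗ d ⊗ w` is orthogonal
to every member with a factor orthogonal to `c` or `d` at the corresponding qubit, whatever `w` is.
If at most three members are left, they impose at most three linear conditions on `w ∈ ℂ⁴`, which
have a nonzero solution. For each of the six pairs of qubits one can pick `c` and `d` among
`|1⟩`, `|0⟩`, `a`, `a'` so that four of the seven members are killed.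
-/

section GroupedProduct

variable {ι Q κ μ ν : Type*}

/-- The product vector `x ⊗ y ⊗ z` for the grouping of the coordinates `Q` into three blocks
`κ`, `μ`, `ν` given by a (bijective) regrouping map `g`. -/
def groupedProduct {R : Type*} [Mul R] (g : Q → κ × μ × ν) (x : κ → R) (y : μ → R) (z : ν → R) :
    Q → R :=
  fun q => x (g q).1 * y (g q).2.1 * z (g q).2.2

/-- The family `F` is extendible for the grouping `g`: some nonzero product vector for `g` is
orthogonal to all its members, so that `F` is not a UPB for `g`. -/
def ExtendibleAlong {R : Type*} [CommSemiring R] [StarRing R] [Fintype Q] (g : Q → κ × μ × ν)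
    (F : ι → Q → R) : Prop :=
  ∃ x y z, groupedProduct g x y z ≠ 0 ∧ ∀ t, star (F t) ⬝ᵥ groupedProduct g x y z = 0

theorem groupedProduct_ne_zero {R : Type*} [MulZeroClass R] [NoZeroDivisors R]
    {g : Q → κ × μ × ν} (hg : g.Surjective) {x : κ → R} {y : μ → R} {z : ν → R}
    (hx : x ≠ 0) (hy : y ≠ 0) (hz : z ≠ 0) : groupedProduct g x y z ≠ 0 := by
  obtain ⟨i, hi⟩ := Function.ne_iff.mp hx
  obtain ⟨j, hj⟩ := Function.ne_iff.mp hy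
  obtain ⟨k, hk⟩ := Function.ne_iff.mp hz
  obtain ⟨q, hq⟩ := hg (i, j, k)
  refine Function.ne_iff.mpr ⟨q, ?_⟩
  simpa only [groupedProduct, hq, Pi.zero_apply] using mul_ne_zero (mul_ne_zero hi hj) hk

variable [Fintype Q] [Fintype κ] [Fintype μ] [Fintype ν]

theorem star_groupedProduct_dotProduct_groupedProduct {R : Type*} [CommSemiring R] [StarRing R]
    {g : Q → κ × μ × ν} (hg : g.Bijective) (x a : κ → R) (y b : μ → R) (z w : ν → R) :
    star (groupedProduct g x y z) ⬝ᵥ groupedProduct g a b w =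
      (star x ⬝ᵥ a) * (star y ⬝ᵥ b) * (star z ⬝ᵥ w) := by
  calc star (groupedProduct g x y z) ⬝ᵥ groupedProduct g a b w
      = ∑ p : κ × μ × ν, star (x p.1 * y p.2.1 * z p.2.2) * (a p.1 * b p.2.1 * w p.2.2) :=
        hg.sum_comp fun p => star (x p.1 * y p.2.1 * z p.2.2) * (a p.1 * b p.2.1 * w p.2.2)
    _ = ∑ i, ∑ j, ∑ k, star (x i) * a i * (star (y j) * b j) * (star (z k) * w k) := by
        simp only [Fintype.sum_prod_type, star_mul']
        congr! 3
        ring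
    _ = (star x ⬝ᵥ a) * (star y ⬝ᵥ b) * (star z ⬝ᵥ w) := by
        simp only [dotProduct, Pi.star_apply, ← Finset.mul_sum, ← Finset.sum_mul]

theorem exists_ne_zero_forall_dotProduct_eq_zero {K : Type*} [Field K] (S : Finset ι)
    (hS : S.card < Fintype.card ν) (v : ι → ν → K) : ∃ w ≠ 0, ∀ t ∈ S, v t ⬝ᵥ w = 0 := by
  let M : Matrix S ν K := Matrix.of fun t => v t
  have hker : LinearMap.ker M.mulVecLin ≠ ⊥ :=
    LinearMap.ker_ne_bot_of_finrank_lt (by simpa using hS)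
  obtain ⟨w, hw, hw0⟩ := Submodule.exists_mem_ne_zero_of_ne_bot hker
  exact ⟨w, hw0, fun t ht => congr_fun (LinearMap.mem_ker.mp hw) ⟨t, ht⟩⟩

theorem extendibleAlong_of_card_lt {K : Type*} [Field K] [StarRing K] [Fintype ι] [DecidableEq ι]
    {g : Q → κ × μ × ν} (hg : g.Bijective) {x : ι → κ → K} {y : ι → μ → K} (z : ι → ν → K)
    {a : κ → K} {b : μ → K} (ha : a ≠ 0) (hb : b ≠ 0) {S T : Finset ι}
    (hS : ∀ t ∈ S, star (x t) ⬝ᵥ a = 0) (hT : ∀ t ∈ T, star (y t) ⬝ᵥ b = 0)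
    (hcard : (S ∪ T)ᶜ.card < Fintype.card ν) :
    ExtendibleAlong g fun t => groupedProduct g (x t) (y t) (z t) := by
  obtain ⟨w, hw, hzw⟩ :=
    exists_ne_zero_forall_dotProduct_eq_zero (S ∪ T)ᶜ hcard fun t => star (z t)
  refine ⟨a, b, w, groupedProduct_ne_zero hg.surjective ha hb hw, fun t => ?_⟩
  rw [star_groupedProduct_dotProduct_groupedProduct hg]
  by_cases htS : t ∈ S
  · rw [hS t htS, zero_mul, zero_mul]
  by_cases htT : t ∈ T
  · rw [hT t htT, mul_zero, zero_mul]
  · rw [hzw t (by simp [htS, htT]), mul_zero]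

end GroupedProduct

/-- The four indices of `p : Q4` as a function of the party, the parties `A, B, C, D` being
numbered `0, 1, 2, 3`. -/
def qubitIndex (p : Q4) : Fin 4 → Fin 2 :=
  ![p.1, p.2.1, p.2.2.1, p.2.2.2]

/-- The grouping of four qubits in which the parties `σ 0` and `σ 1` stay alone and `σ 2` and `σ 3`
are merged; `![0, 2, 1, 3]` is `A:C:BD`. -/
def regroup (σ : Fin 4 → Fin 4) (p : Q4) : Fin 2 × Fin 2 × Fin 2 × Fin 2 :=
  (qubitIndex p (σ 0), qubitIndex p (σ 1), qubitIndex p (σ 2), qubitIndex p (σ 3))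

theorem qubitIndex_injective : qubitIndex.Injective := fun p q h => by
  simpa [Prod.ext_iff, qubitIndex] using h

theorem regroup_bijective {σ : Fin 4 → Fin 4} (hσ : σ.Surjective) : (regroup σ).Bijective := by
  refine Finite.injective_iff_bijective.mp fun p q h => qubitIndex_injective ?_
  refine hσ.injective_comp_right (funext fun i => ?_)
  simp only [regroup, Prod.mk.injEq] at h
  fin_cases i
  exacts [h.1, h.2.1, h.2.2.1, h.2.2.2]

/-- The 4-qubit product vector whose factor at party `i` is `f i`. -/
def qubitProduct (f : Fin 4 → Fin 2 → ℂ) : Q4 → ℂ :=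
  pv (f 0) (f 1) (f 2) (f 3)

theorem qubitProduct_apply (f : Fin 4 → Fin 2 → ℂ) (p : Q4) :
    qubitProduct f p = ∏ i, f i (qubitIndex p i) := by
  simp only [Fin.prod_univ_four]
  rfl

theorem qubitProduct_eq_groupedProduct {σ : Fin 4 → Fin 4} (hσ : σ.Bijective)
    (f : Fin 4 → Fin 2 → ℂ) :
    qubitProduct f = groupedProduct (regroup σ) (f (σ 0)) (f (σ 1))
      fun r => f (σ 2) r.1 * f (σ 3) r.2 := by
  funext p
  rw [qubitProduct_apply, ← hσ.prod_comp, Fin.prod_univ_four]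
  simp only [groupedProduct, regroup, mul_assoc]

theorem extendibleAlong_regroup {ι : Type*} [Fintype ι] [DecidableEq ι] {σ : Fin 4 → Fin 4}
    (hσ : σ.Bijective) {f : ι → Fin 4 → Fin 2 → ℂ} {c d : Fin 2 → ℂ} (hc : c ≠ 0) (hd : d ≠ 0)
    {S T : Finset ι} (hS : ∀ t ∈ S, star (f t (σ 0)) ⬝ᵥ c = 0)
    (hT : ∀ t ∈ T, star (f t (σ 1)) ⬝ᵥ d = 0) (hcard : (S ∪ T)ᶜ.card < 4) :
    ExtendibleAlong (regroup σ) fun t => qubitProduct (f t) := by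
  simp only [qubitProduct_eq_groupedProduct hσ]
  exact extendibleAlong_of_card_lt (regroup_bijective hσ.surjective) _ hc hd hS hT
    (by simpa using hcard)

theorem ket0_ne_zero : ket0 ≠ 0 := Function.ne_iff.mpr ⟨0, by simp [ket0]⟩

theorem ket1_ne_zero : ket1 ≠ 0 := Function.ne_iff.mpr ⟨1, by simp [ket1]⟩

theorem star_ket0_dotProduct_ket1 : star ket0 ⬝ᵥ ket1 = 0 := by
  simp [dotProduct, ket0, ket1]

theorem star_ket1_dotProduct_ket0 : star ket1 ⬝ᵥ ket0 = 0 := by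
  simp [dotProduct, ket0, ket1]

theorem vk_ne_zero (t : ℝ) : vk t ≠ 0 := fun h => by
  have hcos : Real.cos t = 0 := Complex.ofReal_eq_zero.mp (congr_fun h 0)
  have hsin : Real.sin t = 0 := Complex.ofReal_eq_zero.mp (congr_fun h 1)
  simpa [hcos, hsin] using Real.cos_sq_add_sin_sq t

theorem vk'_ne_zero (t : ℝ) : vk' t ≠ 0 := fun h => by
  have hsin : Real.sin t = 0 := Complex.ofReal_eq_zero.mp (congr_fun h 0)
  have hcos : Real.cos t = 0 := Complex.ofReal_eq_zero.mp (neg_eq_zero.mp (congr_fun h 1))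
  simpa [hcos, hsin] using Real.cos_sq_add_sin_sq t

theorem star_vk_dotProduct_vk' (t : ℝ) : star (vk t) ⬝ᵥ vk' t = 0 := by
  simp [dotProduct, vk, vk', -Complex.ofReal_cos, -Complex.ofReal_sin, mul_comm]

/-- The local factors (row: member, column: party) of the family `T7`, with the pairs `vk α, vk' α`
and `vk β, vk' β` replaced by arbitrary qubit vectors `a, a'` and `b, b'`. -/
def sevenFactors (a a' b b' : Fin 2 → ℂ) : Fin 7 → Fin 4 → Fin 2 → ℂ :=
  ![![ket0, ket0, ket0, ket0],
    ![ket0, a, a, ket1],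
    ![ket0, a', ket1, a],
    ![ket1, ket0, ket0, b],
    ![ket1, a', a, b'],
    ![a, a, ket1, ket0],
    ![a', ket1, a', a']]

theorem T7_eq_qubitProduct (α β : ℝ) :
    T7 α β = fun t => qubitProduct (sevenFactors (vk α) (vk' α) (vk β) (vk' β) t) := by
  funext t
  fin_cases t <;> rfl

theorem stmt8_general {a a' : Fin 2 → ℂ} (ha : a ≠ 0) (ha' : a' ≠ 0) (hperp : star a ⬝ᵥ a' = 0)
    (b b' : Fin 2 → ℂ) :
    let F := fun t => qubitProduct (sevenFactors a a' b b' t)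
    ExtendibleAlong (regroup ![0, 1, 2, 3]) F ∧ ExtendibleAlong (regroup ![0, 2, 1, 3]) F ∧
    ExtendibleAlong (regroup ![0, 3, 1, 2]) F ∧ ExtendibleAlong (regroup ![1, 2, 0, 3]) F ∧
    ExtendibleAlong (regroup ![1, 3, 0, 2]) F ∧ ExtendibleAlong (regroup ![2, 3, 0, 1]) F := by
  have hperp_symm : star a' ⬝ᵥ a = 0 := by rw [Matrix.star_dotProduct, hperp, star_zero]
  let f := sevenFactors a a' b b'
  have hA1 : ∀ t ∈ ({0, 1, 2} : Finset (Fin 7)), star (f t 0) ⬝ᵥ ket1 = 0 := by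
    simpa [f, sevenFactors] using star_ket0_dotProduct_ket1
  have hB1 : ∀ t ∈ ({0, 3} : Finset (Fin 7)), star (f t 1) ⬝ᵥ ket1 = 0 := by
    simpa [f, sevenFactors] using star_ket0_dotProduct_ket1
  have hBa : ∀ t ∈ ({2, 4} : Finset (Fin 7)), star (f t 1) ⬝ᵥ a = 0 := by
    simpa [f, sevenFactors] using hperp_symm
  have hC0 : ∀ t ∈ ({2, 5} : Finset (Fin 7)), star (f t 2) ⬝ᵥ ket0 = 0 := by
    simpa [f, sevenFactors] using star_ket1_dotProduct_ket0
  have hC1 : ∀ t ∈ ({0, 3} : Finset (Fin 7)), star (f t 2) ⬝ᵥ ket1 = 0 := by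
    simpa [f, sevenFactors] using star_ket0_dotProduct_ket1
  have hCa' : ∀ t ∈ ({1, 4} : Finset (Fin 7)), star (f t 2) ⬝ᵥ a' = 0 := by
    simpa [f, sevenFactors] using hperp
  have hD1 : ∀ t ∈ ({0, 5} : Finset (Fin 7)), star (f t 3) ⬝ᵥ ket1 = 0 := by
    simpa [f, sevenFactors] using star_ket0_dotProduct_ket1
  exact
    ⟨extendibleAlong_regroup (by decide) ket1_ne_zero ket1_ne_zero hA1 hB1 (by decide),
      extendibleAlong_regroup (by decide) ket1_ne_zero ket1_ne_zero hA1 hC1 (by decide),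
      extendibleAlong_regroup (by decide) ket1_ne_zero ket1_ne_zero hA1 hD1 (by decide),
      extendibleAlong_regroup (by decide) ket1_ne_zero ket0_ne_zero hB1 hC0 (by decide),
      extendibleAlong_regroup (by decide) ha ket1_ne_zero hBa hD1 (by decide),
      extendibleAlong_regroup (by decide) ha' ket1_ne_zero hCa' hD1 (by decide)⟩

/-- `T₇` is not a UPB for any of the six `2 × 2 × 4` groupings
`A:B:CD`, `A:C:BD`, `A:D:BC`, `B:C:AD`, `B:D:AC`, `C:D:AB`: for each there is a
nonzero product vector of the corresponding form orthogonal to all seven members. -/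
theorem stmt8 (α β : ℝ) (hα : α ∈ Set.Ioo 0 (Real.pi / 2))
    (hβ : β ∈ Set.Ioo 0 (Real.pi / 2)) :
    (∃ (a b : Fin 2 → ℂ) (w : Fin 2 × Fin 2 → ℂ),
      (fun p : Q4 => a p.1 * b p.2.1 * w (p.2.2.1, p.2.2.2)) ≠ 0 ∧
      ∀ t, ip (T7 α β t) (fun p : Q4 => a p.1 * b p.2.1 * w (p.2.2.1, p.2.2.2)) = 0) ∧
    (∃ (a c : Fin 2 → ℂ) (w : Fin 2 × Fin 2 → ℂ),
      (fun p : Q4 => a p.1 * c p.2.2.1 * w (p.2.1, p.2.2.2)) ≠ 0 ∧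
      ∀ t, ip (T7 α β t) (fun p : Q4 => a p.1 * c p.2.2.1 * w (p.2.1, p.2.2.2)) = 0) ∧
    (∃ (a d : Fin 2 → ℂ) (w : Fin 2 × Fin 2 → ℂ),
      (fun p : Q4 => a p.1 * d p.2.2.2 * w (p.2.1, p.2.2.1)) ≠ 0 ∧
      ∀ t, ip (T7 α β t) (fun p : Q4 => a p.1 * d p.2.2.2 * w (p.2.1, p.2.2.1)) = 0) ∧
    (∃ (b c : Fin 2 → ℂ) (w : Fin 2 × Fin 2 → ℂ),
      (fun p : Q4 => b p.2.1 * c p.2.2.1 * w (p.1, p.2.2.2)) ≠ 0 ∧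
      ∀ t, ip (T7 α β t) (fun p : Q4 => b p.2.1 * c p.2.2.1 * w (p.1, p.2.2.2)) = 0) ∧
    (∃ (b d : Fin 2 → ℂ) (w : Fin 2 × Fin 2 → ℂ),
      (fun p : Q4 => b p.2.1 * d p.2.2.2 * w (p.1, p.2.2.1)) ≠ 0 ∧
      ∀ t, ip (T7 α β t) (fun p : Q4 => b p.2.1 * d p.2.2.2 * w (p.1, p.2.2.1)) = 0) ∧
    (∃ (c d : Fin 2 → ℂ) (w : Fin 2 × Fin 2 → ℂ),
      (fun p : Q4 => c p.2.2.1 * d p.2.2.2 * w (p.1, p.2.1)) ≠ 0 ∧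
      ∀ t, ip (T7 α β t) (fun p : Q4 => c p.2.2.1 * d p.2.2.2 * w (p.1, p.2.1)) = 0) := by
  rw [T7_eq_qubitProduct]
  exact stmt8_general (vk_ne_zero α) (vk'_ne_zero α) (star_vk_dotProduct_vk' α) (vk β) (vk' β)
end

section
/- For all α, β, γ, δ ∈ (0, π/2): every 6-element subset of the nine AB-part vectors u₁ = |0,0⟩, u₂ = |0,1⟩, u₃ = |0,b⟩, u₄ = |1,1⟩, u₅ = |1,b⟩, u₆ = |1,0⟩, u₇ = |a,0⟩, u₈ = |a,1⟩, u₉ = |a',b'⟩ spans the whole space Fin 2 × Fin 2 → ℂ (≅ ℂ⁴); likewise every 6-element subset of the nine CD-part vectors |1,d⟩, |c,0⟩, |0,1⟩, |0,d⟩, |1,0⟩, |c,1⟩, |0,0⟩, |1,1⟩, |c',d'⟩ spans Fin 2 × Fin 2 → ℂ. -/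
/-- The two-qubit product vector `|x,y⟩` in `ℂ⁴`. -/
def pv2 (x y : Fin 2 → ℂ) : Fin 2 × Fin 2 → ℂ := fun p => x p.1 * y p.2

/-- The `AB`-parts of the nine members of the size-9 UPB `S₉`. -/
noncomputable def uAB (α β : ℝ) : Fin 9 → Fin 2 × Fin 2 → ℂ :=
  ![pv2 ket0 ket0, pv2 ket0 ket1, pv2 ket0 (vk β),
    pv2 ket1 ket1, pv2 ket1 (vk β), pv2 ket1 ket0,
    pv2 (vk α) ket0, pv2 (vk α) ket1, pv2 (vk' α) (vk' β)]

/-- The `CD`-parts of the nine members of the size-9 UPB `S₉`. -/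
noncomputable def uCD (γ δ : ℝ) : Fin 9 → Fin 2 × Fin 2 → ℂ :=
  ![pv2 ket1 (vk δ), pv2 (vk γ) ket0, pv2 ket0 ket1,
    pv2 ket0 (vk δ), pv2 ket1 ket0, pv2 (vk γ) ket1,
    pv2 ket0 ket0, pv2 ket1 ket1, pv2 (vk' γ) (vk' δ)]

/-! Arrange the product vectors in a grid, with rows indexed by the first factor and columns by the
second. Any two distinct states occurring in the same factor span `ℂ²`. If a subspace contains
`x ⊗ y` and `x ⊗ y'`, together with `x₁ ⊗ z` and `x₂ ⊗ z'` where the last two lie outside the row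
of `x` and in different columns, then it contains `x ⊗ ℂ²`, hence `ℂ² ⊗ z` and `ℂ² ⊗ z'`, hence
everything. Such a quadruple exists in every set of six vectors: the nine vectors occupy four rows,
so two of the six share a row, and a row and a column together contain at most five of the nine, so
the remaining ones do not all lie in a single column. -/

section Hook

variable {R V W M : Type*} [CommSemiring R] [AddCommMonoid V] [AddCommMonoid W] [AddCommMonoid M]
  [Module R V] [Module R W] [Module R M]

lemma apply_mem_of_span_pair_eq_top {g : V →ₗ[R] M} {S : Submodule R M} {x x' : V}
    (hspan : Submodule.span R {x, x'} = ⊤) (hx : g x ∈ S) (hx' : g x' ∈ S) (v : V) :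
    g v ∈ S := by
  have hle : Submodule.span R {x, x'} ≤ S.comap g :=
    Submodule.span_le.2 (Set.pair_subset hx hx')
  exact hle (hspan ▸ Submodule.mem_top)

lemma map₂_top_top_le_of_hook_mem {T : V →ₗ[R] W →ₗ[R] M} {S : Submodule R M}
    {x x₁ x₂ : V} {y y' z z' : W}
    (hx₁ : Submodule.span R {x, x₁} = ⊤) (hx₂ : Submodule.span R {x, x₂} = ⊤)
    (hy : Submodule.span R {y, y'} = ⊤) (hz : Submodule.span R {z, z'} = ⊤)
    (hxy : T x y ∈ S) (hxy' : T x y' ∈ S) (hxz : T x₁ z ∈ S) (hxz' : T x₂ z' ∈ S) :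
    Submodule.map₂ T ⊤ ⊤ ≤ S := by
  have row (w : W) : T x w ∈ S := apply_mem_of_span_pair_eq_top hy hxy hxy' w
  have column (v : V) : T v z ∈ S :=
    apply_mem_of_span_pair_eq_top (g := T.flip z) hx₁ (row z) hxz v
  have column' (v : V) : T v z' ∈ S :=
    apply_mem_of_span_pair_eq_top (g := T.flip z') hx₂ (row z') hxz' v
  exact Submodule.map₂_le.2 fun v _ w _ ↦
    apply_mem_of_span_pair_eq_top hz (column v) (column' v) w

theorem map₂_top_top_le_span_image_of_grid {ι κ σ : Type*} [Fintype ι]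
    {T : V →ₗ[R] W →ₗ[R] M} {x : ι → V} {y : κ → W} {cell : σ → ι × κ} {s : Finset σ}
    (hx : Pairwise fun i j ↦ Submodule.span R {x i, x j} = ⊤)
    (hy : Pairwise fun i j ↦ Submodule.span R {y i, y j} = ⊤)
    (hcell : Function.Injective cell) (hcard : Fintype.card ι < s.card)
    (hcross : ∀ i j, ∃ k ∈ s, (cell k).1 ≠ i ∧ (cell k).2 ≠ j) :
    Submodule.map₂ T ⊤ ⊤ ≤
      Submodule.span R ((fun k ↦ T (x (cell k).1) (y (cell k).2)) '' (s : Set σ)) := by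
  set S := Submodule.span R ((fun k ↦ T (x (cell k).1) (y (cell k).2)) '' (s : Set σ))
  have mem_S {k : σ} (hk : k ∈ s) : T (x (cell k).1) (y (cell k).2) ∈ S :=
    Submodule.subset_span ⟨k, hk, rfl⟩
  obtain ⟨k, hk, k', hk', hne, hrow⟩ := Finset.exists_ne_map_eq_of_card_lt_of_maps_to
    (f := fun k ↦ (cell k).1) hcard fun _ _ ↦ Finset.mem_univ _
  have hcol : (cell k).2 ≠ (cell k').2 := fun h ↦ hne (hcell (Prod.ext hrow h))
  obtain ⟨l, hl, hlrow, -⟩ := hcross (cell k).1 (cell k).2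
  obtain ⟨l', hl', hlrow', hlcol⟩ := hcross (cell k).1 (cell l).2
  exact map₂_top_top_le_of_hook_mem (hx hlrow.symm) (hx hlrow'.symm) (hy hcol) (hy hlcol.symm)
    (mem_S hk) (by simpa only [hrow] using mem_S hk') (mem_S hl) (mem_S hl')

end Hook

section Coordinates

variable {R : Type*}

lemma span_range_row_eq_top_of_isUnit_det [CommRing R] {n : Type*} [Fintype n] [DecidableEq n]
    {A : Matrix n n R} (hA : IsUnit A.det) : Submodule.span R (Set.range A.row) = ⊤ := by
  rw [← range_vecMulLinear, LinearMap.range_eq_top]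
  exact Matrix.vecMul_surjective_iff_isUnit.2 ((Matrix.isUnit_iff_isUnit_det A).2 hA)

lemma span_pair_eq_top_of_isUnit_det [CommRing R] {v w : Fin 2 → R}
    (h : IsUnit (v 0 * w 1 - v 1 * w 0)) : Submodule.span R {v, w} = ⊤ := by
  have hdet : IsUnit (Matrix.of ![v, w]).det := by simpa [Matrix.det_fin_two] using h
  have hrange : Set.range (Matrix.of ![v, w]).row = {v, w} := Matrix.range_cons_cons_empty v w _
  rw [← hrange, span_range_row_eq_top_of_isUnit_det hdet]

variable [CommSemiring R] {m n : Type*}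

/-- The Kronecker product of vectors as a bilinear map, with the coordinates of the product indexed
by pairs; for qubits this is the map `(x, y) ↦ |x,y⟩` of `pv2`. -/
def kroneckerVec : (m → R) →ₗ[R] (n → R) →ₗ[R] (m × n → R) :=
  (LinearMap.mul R (m × n → R)).compl₁₂
    (LinearMap.funLeft R R Prod.fst) (LinearMap.funLeft R R Prod.snd)

lemma map₂_kroneckerVec_top_top [Finite m] [Finite n] :
    Submodule.map₂ (kroneckerVec : (m → R) →ₗ[R] (n → R) →ₗ[R] (m × n → R)) ⊤ ⊤ = ⊤ := by
  classical
  rw [eq_top_iff, ← (Pi.basisFun R (m × n)).span_eq, Submodule.span_le]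
  rintro _ ⟨⟨i, j⟩, rfl⟩
  have hsingle : Pi.basisFun R (m × n) (i, j) = kroneckerVec (Pi.single i 1) (Pi.single j 1) := by
    ext ⟨i', j'⟩
    simp [kroneckerVec, LinearMap.funLeft_apply, Pi.single_apply, ← ite_and, and_comm]
  exact hsingle ▸ Submodule.apply_mem_map₂ _ Submodule.mem_top Submodule.mem_top

end Coordinates

/-- The four single-qubit states `|0⟩`, `|1⟩`, `vk t`, `vk' t` that occur in one tensor factor
of `S₉`. -/
noncomputable def qubitStates (t : ℝ) : Fin 4 → Fin 2 → ℂ := ![ket0, ket1, vk t, vk' t]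

lemma pairwise_span_qubitStates_eq_top {t : ℝ} (ht : Real.sin (2 * t) ≠ 0) :
    Pairwise fun i j ↦ Submodule.span ℂ {qubitStates t i, qubitStates t j} = ⊤ := by
  rw [Real.sin_two_mul] at ht
  have hsin : Complex.sin t ≠ 0 := by exact_mod_cast right_ne_zero_of_mul (left_ne_zero_of_mul ht)
  have hcos : Complex.cos t ≠ 0 := by exact_mod_cast right_ne_zero_of_mul ht
  have hdet : -(Complex.cos t * Complex.cos t) - Complex.sin t * Complex.sin t ≠ 0 := by
    rw [← neg_add', ← sq, ← sq, Complex.cos_sq_add_sin_sq]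
    exact neg_ne_zero.2 one_ne_zero
  have : Std.Symm fun i j ↦ Submodule.span ℂ {qubitStates t i, qubitStates t j} = ⊤ :=
    ⟨fun _ _ h ↦ Set.pair_comm _ _ ▸ h⟩
  refine Pairwise.of_lt fun i j hij ↦ span_pair_eq_top_of_isUnit_det (isUnit_iff_ne_zero.2 ?_)
  fin_cases i <;> fin_cases j <;>
    first
    | exact absurd hij (by decide)
    | simp [qubitStates, ket0, ket1, vk, vk', hsin, hcos, hdet]

/-- The positions of the vectors `uAB` in the grid of pairs of `qubitStates`. -/
def cellAB : Fin 9 → Fin 4 × Fin 4 :=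
  ![(0, 0), (0, 1), (0, 2), (1, 1), (1, 2), (1, 0), (2, 0), (2, 1), (3, 3)]

/-- The positions of the vectors `uCD` in the grid of pairs of `qubitStates`. -/
def cellCD : Fin 9 → Fin 4 × Fin 4 :=
  ![(1, 2), (2, 0), (0, 1), (0, 2), (1, 0), (2, 1), (0, 0), (1, 1), (3, 3)]

lemma uAB_eq_kroneckerVec (α β : ℝ) : uAB α β = fun k ↦
    kroneckerVec (qubitStates α (cellAB k).1) (qubitStates β (cellAB k).2) := by
  funext k
  fin_cases k <;> rfl

lemma uCD_eq_kroneckerVec (γ δ : ℝ) : uCD γ δ = fun k ↦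
    kroneckerVec (qubitStates γ (cellCD k).1) (qubitStates δ (cellCD k).2) := by
  funext k
  fin_cases k <;> rfl

lemma cellAB_injective : Function.Injective cellAB := by decide

lemma cellCD_injective : Function.Injective cellCD := by decide

lemma card_cellAB_cross_le (i j : Fin 4) :
    (Finset.univ.filter fun k ↦ (cellAB k).1 = i ∨ (cellAB k).2 = j).card ≤ 5 := by
  decide +revert

lemma card_cellCD_cross_le (i j : Fin 4) :
    (Finset.univ.filter fun k ↦ (cellCD k).1 = i ∨ (cellCD k).2 = j).card ≤ 5 := by
  decide +revert

lemma span_kroneckerVec_qubitStates_eq_top {σ : Type*} [Fintype σ] {cell : σ → Fin 4 × Fin 4}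
    (hcell : Function.Injective cell)
    (hcross : ∀ i j, (Finset.univ.filter fun k ↦ (cell k).1 = i ∨ (cell k).2 = j).card ≤ 5)
    {t u : ℝ} (ht : Real.sin (2 * t) ≠ 0) (hu : Real.sin (2 * u) ≠ 0)
    {s : Finset σ} (hs : 6 ≤ s.card) :
    Submodule.span ℂ ((fun k ↦ kroneckerVec (qubitStates t (cell k).1) (qubitStates u (cell k).2))
      '' (s : Set σ)) = ⊤ := by
  rw [eq_top_iff, ← map₂_kroneckerVec_top_top]
  refine map₂_top_top_le_span_image_of_grid (pairwise_span_qubitStates_eq_top ht)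
    (pairwise_span_qubitStates_eq_top hu) hcell (by rw [Fintype.card_fin]; lia) fun i j ↦ ?_
  obtain ⟨k, hk, hk'⟩ := Finset.exists_mem_notMem_of_card_lt_card
    ((hcross i j).trans_lt (Nat.lt_of_succ_le hs))
  exact ⟨k, hk, by simpa using hk'⟩

theorem stmt12_general (α β γ δ : ℝ) (hα : Real.sin (2 * α) ≠ 0) (hβ : Real.sin (2 * β) ≠ 0)
    (hγ : Real.sin (2 * γ) ≠ 0) (hδ : Real.sin (2 * δ) ≠ 0) :
    (∀ s : Finset (Fin 9), 6 ≤ s.card →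
      Submodule.span ℂ (uAB α β '' (s : Set (Fin 9))) = ⊤) ∧
    (∀ s : Finset (Fin 9), 6 ≤ s.card →
      Submodule.span ℂ (uCD γ δ '' (s : Set (Fin 9))) = ⊤) := by
  rw [uAB_eq_kroneckerVec, uCD_eq_kroneckerVec]
  exact ⟨fun _ ↦ span_kroneckerVec_qubitStates_eq_top cellAB_injective card_cellAB_cross_le hα hβ,
    fun _ ↦ span_kroneckerVec_qubitStates_eq_top cellCD_injective card_cellCD_cross_le hγ hδ⟩

lemma sin_two_mul_ne_zero {t : ℝ} (ht : t ∈ Set.Ioo 0 (Real.pi / 2)) : Real.sin (2 * t) ≠ 0 :=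
  (Real.sin_pos_of_pos_of_lt_pi (by linarith [ht.1]) (by linarith [ht.2])).ne'

/-- Every 6-element subset of the nine `AB`-part vectors of `S₉` spans `ℂ⁴`,
and likewise every 6-element subset of the nine `CD`-part vectors spans `ℂ⁴`. -/
theorem stmt12 (α β γ δ : ℝ) (hα : α ∈ Set.Ioo 0 (Real.pi / 2))
    (hβ : β ∈ Set.Ioo 0 (Real.pi / 2)) (hγ : γ ∈ Set.Ioo 0 (Real.pi / 2))
    (hδ : δ ∈ Set.Ioo 0 (Real.pi / 2)) :
    (∀ s : Finset (Fin 9), s.card = 6 →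
      Submodule.span ℂ (uAB α β '' (s : Set (Fin 9))) = ⊤) ∧
    (∀ s : Finset (Fin 9), s.card = 6 →
      Submodule.span ℂ (uCD γ δ '' (s : Set (Fin 9))) = ⊤) := by
  obtain ⟨hAB, hCD⟩ := stmt12_general α β γ δ (sin_two_mul_ne_zero hα) (sin_two_mul_ne_zero hβ)
    (sin_two_mul_ne_zero hγ) (sin_two_mul_ne_zero hδ)
  exact ⟨fun s hs ↦ hAB s hs.ge, fun s hs ↦ hCD s hs.ge⟩
end
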